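/- (Interface dissipation of the friction slip model BII with a fluidic interface.) Let n ∈ ℝᵈ with ‖n‖ = 1 and P := I − n nᵀ. Let u₋, u₊, U_T, b ∈ ℝᵈ with ⟨U_T, n⟩ = 0, let U_N ∈ ℝ, set U := U_T + U_N n, let σ₋, σ₊ be d×d real matrices and f₋, f₊ ∈ ℝ. Assume: (i) ⟨u₋, n⟩ = ⟨u₊, n⟩ = U_N; (ii) P(σ₋ n) = −f₋ (P u₋ − U_T); (iii) P(σ₊ n) = f₊ (P u₊ − U_T); (iv) (σ₋ − σ₊) n = −b. Then ⟨u₋, σ₋ n⟩ − ⟨u₊, σ₊ n⟩ = −⟨U, b⟩ − f₋ ‖P u₋ − U_T‖² − f₊ ‖P u₊ − U_T‖². -/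

import Mathlib

open Matrix

/-!
Since the normal velocities agree, the slip `P u± - U_T` equals `u± - U`, and it is orthogonal
to `n`. Writing `u± = U + (P u± - U_T)`, the power of the traction on each side is
`⟨U, σ± n⟩` plus the power of the tangential traction against the slip, which the friction law
evaluates (`dotProduct_traction_eq_of_slip`). In the difference of the two sides the
`U`-terms combine to `-⟨U, b⟩` by the momentum flux balance.
-/

/-- The power of a traction `s` against a bulk velocity `u` splits as its power against the surface
velocity `UT + UN • n` plus `c` times the squared slip. The slip `P u - UT` equals
`u - (UT + UN • n)` and is tangential, so it only sees the tangential traction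
`P s = c • (P u - UT)`. -/
theorem dotProduct_traction_eq_of_slip {d : ℕ} {n u UT s : Fin d → ℝ} {UN c : ℝ}
    {P : Matrix (Fin d) (Fin d) ℝ} (hn : n ⬝ᵥ n = 1) (hUT : UT ⬝ᵥ n = 0)
    (hP : P = 1 - Matrix.vecMulVec n n) (hu : u ⬝ᵥ n = UN)
    (hs : P.mulVec s = c • (P.mulVec u - UT)) :
    u ⬝ᵥ s = (UT + UN • n) ⬝ᵥ s + c * ((P.mulVec u - UT) ⬝ᵥ (P.mulVec u - UT)) := by
  have hPv : ∀ v : Fin d → ℝ, P.mulVec v = v - (n ⬝ᵥ v) • n := by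
    intro v
    ext i
    simp [hP, Matrix.sub_mulVec, Matrix.vecMulVec_mulVec, mul_comm]
  have hw : P.mulVec u - UT = u - (UT + UN • n) := by
    rw [hPv, dotProduct_comm, hu]
    abel
  have hwn : (P.mulVec u - UT) ⬝ᵥ n = 0 := by
    rw [hw]
    simp [sub_dotProduct, add_dotProduct, hn, hUT, hu]
  have hws : (P.mulVec u - UT) ⬝ᵥ s = c * ((P.mulVec u - UT) ⬝ᵥ (P.mulVec u - UT)) := by
    have h := congrArg (fun v => (P.mulVec u - UT) ⬝ᵥ v) hs
    simpa only [hPv s, dotProduct_sub _ s, dotProduct_smul, hwn, smul_eq_mul, mul_zero,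
      sub_zero] using h
  rw [← hws, hw, sub_dotProduct]
  ring

/-- Interface dissipation of the friction slip model BII with a fluidic interface:
with `P := I − n nᵀ` for a unit normal `n`, surface velocity `U = U_T + U_N n`
(`⟨U_T, n⟩ = 0`), continuity of the normal velocity `⟨u₋,n⟩ = ⟨u₊,n⟩ = U_N`, friction slip
laws for the tangential stresses with coefficients `f₋, f₊`, and the momentum flux balance
`(σ₋ − σ₊) n = −b`, the interface dissipation rate is
`⟨u₋, σ₋ n⟩ − ⟨u₊, σ₊ n⟩ = −⟨U, b⟩ − f₋‖P u₋ − U_T‖² − f₊‖P u₊ − U_T‖²`. -/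
theorem friction_slip_dissipation_BII (d : ℕ) (n : Fin d → ℝ) (hn : n ⬝ᵥ n = 1)
    (uminus uplus UT b : Fin d → ℝ) (hUT : UT ⬝ᵥ n = 0) (UN : ℝ)
    (U : Fin d → ℝ) (hU : U = UT + UN • n)
    (σminus σplus : Matrix (Fin d) (Fin d) ℝ) (fminus fplus : ℝ)
    (P : Matrix (Fin d) (Fin d) ℝ) (hP : P = 1 - Matrix.vecMulVec n n)
    (h1m : uminus ⬝ᵥ n = UN) (h1p : uplus ⬝ᵥ n = UN)
    (h2 : P.mulVec (σminus.mulVec n) = (-fminus) • (P.mulVec uminus - UT))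
    (h3 : P.mulVec (σplus.mulVec n) = fplus • (P.mulVec uplus - UT))
    (h4 : (σminus - σplus).mulVec n = -b) :
    uminus ⬝ᵥ σminus.mulVec n - uplus ⬝ᵥ σplus.mulVec n =
      -(U ⬝ᵥ b) - fminus * ((P.mulVec uminus - UT) ⬝ᵥ (P.mulVec uminus - UT))
        - fplus * ((P.mulVec uplus - UT) ⬝ᵥ (P.mulVec uplus - UT)) := by
  have hm := dotProduct_traction_eq_of_slip hn hUT hP h1m h2
  have hp := dotProduct_traction_eq_of_slip hn hUT hP h1p h3
  have hb : U ⬝ᵥ σminus.mulVec n - U ⬝ᵥ σplus.mulVec n = -(U ⬝ᵥ b) := by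
    rw [← dotProduct_sub, ← Matrix.sub_mulVec, h4, dotProduct_neg]
  rw [← hU] at hm hp
  linarith
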